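/- Fix x > 0 and δ ≥ 1. Let C_x = ln(1+x)/(ln(1+x) − x/(1+x)) and D_x = 2·ln(x/(1+x))/ln(1+x). If G is an n-vertex graph with minimum degree at least δ and n ≥ (C_x−1)δ² + ((1−D_x)C_x + 1 + D_x)δ − D_x, then either G = K_{δ,n−δ} or P(G,x) < P(K_{δ,n−δ},x). -/

import Mathlib

/-- A finset of vertices is independent: no edge inside. -/
def SimpleGraph.IsIndepFinset {V : Type*} (G : SimpleGraph V) (s : Finset V) : Prop :=
  ∀ v ∈ s, ∀ w ∈ s, ¬ G.Adj v w

/-- `indepCount G t` = number of independent sets of size `t` in `G`. -/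
noncomputable def indepCount {V : Type*} [Fintype V] (G : SimpleGraph V) (t : ℕ) : ℕ :=
  Nat.card {s : Finset V // s.card = t ∧ G.IsIndepFinset s}

/-- `indepTotal G` = total number of independent sets in `G` (including ∅). -/
noncomputable def indepTotal {V : Type*} [Fintype V] (G : SimpleGraph V) : ℕ :=
  Nat.card {s : Finset V // G.IsIndepFinset s}

open Classical in
/-- The independence polynomial `P(G,x) = Σ_t i_t(G) xᵗ`. -/
noncomputable def indPoly {V : Type*} [Fintype V] (G : SimpleGraph V) (x : ℝ) : ℝ :=
  ∑ s ∈ Finset.univ.filter (fun s : Finset V => G.IsIndepFinset s), x ^ s.card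

/-!
Let `I` be a maximum independent set, with complement of size `k + δ`, and put `q = x / (1 + x)`.
Sorting the independent sets of `G` by their trace `S` on the complement of `I` gives
`P(G, x) = ∑ x ^ |S| (1 + x) ^ m(S)`, where `m(S)` counts the vertices of `I` without a neighbour
in `S`. Exchanging gives `m(S) + |S| ≤ |I|`, so `P(G, x) ≤ (1 + x) ^ |I| (1 + q) ^ (k + δ)`, which
is at most `(1 + x) ^ (|I| + k)` as soon as `C_x δ ≤ k + δ`.

For smaller `k ≥ 1`, double counting the edges between `I` and its complement yields a set `H` of
`δ` vertices outside `I`, each with at least `|I| / (k + 1) ≥ δ - D_x` neighbours in `I`. The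
traces avoiding `H` contribute at most `(1 + x) ^ |I| (1 + q) ^ k`, those meeting `H` at most
`q ^ 2 (1 + x) ^ (|I| + k)`, and `1 + q = (1 + x) (1 - q ^ 2)`. In both cases
`P(G, x) ≤ (1 + x) ^ (n - δ) < P(K_{δ, n - δ}, x)`; for `k = 0` the graph contains `K_{δ, n - δ}`.
-/

section Finset

open Finset

theorem sum_powerset_pow_card {α R : Type*} [CommSemiring R] (s : Finset α) (x : R) :
    ∑ t ∈ s.powerset, x ^ #t = (1 + x) ^ #s := by
  classical simpa only [prod_const] using (prod_one_add (f := fun _ ↦ x) s).symm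

/-- With `h` the number of vertices counted on the right, if `h < δ` then each `a ∈ s` has at least
`δ - h` neighbours among the `k + δ - h ≤ (k + 1) (δ - h)` other vertices of `t`. -/
theorem le_card_filter_card_le_succ_mul_card_bipartiteBelow {α β : Type*} (r : α → β → Prop)
    [∀ a b, Decidable (r a b)] {s : Finset α} {t : Finset β} {k δ : ℕ} (ht : #t = k + δ)
    (hs : ∀ a ∈ s, δ ≤ #(t.bipartiteAbove r a)) :
    δ ≤ #{b ∈ t | #s ≤ (k + 1) * #(s.bipartiteBelow r b)} := by
  classical
  set heavy := {b ∈ t | #s ≤ (k + 1) * #(s.bipartiteBelow r b)}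
  set light := {b ∈ t | ¬ #s ≤ (k + 1) * #(s.bipartiteBelow r b)}
  by_contra! hlt
  have hcard : #heavy + #light = k + δ := by rw [← ht]; exact card_filter_add_card_filter_not _
  have habove (a) (ha : a ∈ s) : δ - #heavy ≤ #(light.bipartiteAbove r a) := by
    have hcover : t.bipartiteAbove r a ⊆ heavy ∪ light.bipartiteAbove r a := by
      intro b hb
      simp only [heavy, light, bipartiteAbove, mem_union, mem_filter] at hb ⊢
      tauto
    have := (hs a ha).trans ((card_le_card hcover).trans (card_union_le _ _))
    omega
  have hlight : light.Nonempty := card_pos.mp (by omega)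
  have hbelow (b) (hb : b ∈ light) : (k + 1) * #(s.bipartiteBelow r b) < #s :=
    not_le.mp (mem_filter.mp hb).2
  have hratio : #light ≤ (k + 1) * (δ - #heavy) := by
    obtain ⟨j, hj⟩ : ∃ j, δ - #heavy = j + 1 := ⟨δ - #heavy - 1, by omega⟩
    have : #light = k + (j + 1) := by omega
    rw [this, hj]
    nlinarith
  have : (k + 1) * (#s * (δ - #heavy)) < (k + 1) * (#s * (δ - #heavy)) :=
    calc (k + 1) * (#s * (δ - #heavy))
        ≤ (k + 1) * ∑ a ∈ s, #(light.bipartiteAbove r a) := by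
          gcongr; exact card_nsmul_le_sum _ _ _ habove
      _ = ∑ b ∈ light, (k + 1) * #(s.bipartiteBelow r b) := by
          rw [sum_card_bipartiteAbove_eq_sum_card_bipartiteBelow, mul_sum]
      _ < #light * #s := by
          simpa only [sum_const, smul_eq_mul] using sum_lt_sum_of_nonempty hlight hbelow
      _ ≤ (k + 1) * (δ - #heavy) * #s := by gcongr
      _ = (k + 1) * (#s * (δ - #heavy)) := by ring
  exact lt_irrefl _ this

end Finset

section IndependencePolynomial

open Finset SimpleGraph

variable {V W : Type*}

theorem isIndepFinset_iff_isIndepSet {G : SimpleGraph V} {s : Finset V} :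
    G.IsIndepFinset s ↔ G.IsIndepSet (s : Set V) :=
  ⟨fun h v hv w hw _ ↦ h v hv w hw, fun h _ hv _ hw hvw ↦ h hv hw hvw.ne hvw⟩

open scoped Classical in
/-- The independent sets of `G` contained in `U`, over which the pieces of the independence
polynomial are summed. -/
noncomputable def indepSubsets (G : SimpleGraph V) (U : Finset V) : Finset (Finset V) :=
  {S ∈ U.powerset | G.IsIndepSet (S : Set V)}

theorem mem_indepSubsets {G : SimpleGraph V} {U S : Finset V} :
    S ∈ indepSubsets G U ↔ S ⊆ U ∧ G.IsIndepSet (S : Set V) := by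
  simp only [indepSubsets, mem_filter, mem_powerset]

theorem indepSubsets_subset_powerset (G : SimpleGraph V) (U : Finset V) :
    indepSubsets G U ⊆ U.powerset := fun _ hS ↦ mem_powerset.mpr (mem_indepSubsets.mp hS).1

variable [Fintype V] [Fintype W] {x : ℝ}

theorem indPoly_eq_sum_indepSubsets_univ (G : SimpleGraph V) (x : ℝ) :
    indPoly G x = ∑ S ∈ indepSubsets G univ, x ^ #S := by
  classical
  refine sum_congr ?_ fun _ _ ↦ rfl
  ext S
  rw [mem_filter_univ, mem_indepSubsets, isIndepFinset_iff_isIndepSet]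
  exact (and_iff_right (subset_univ S)).symm

theorem indPoly_strictAnti (hx : 0 < x) : StrictAnti fun G : SimpleGraph V ↦ indPoly G x := by
  classical
  intro G H hlt
  obtain ⟨hle, v, w, hH, hG⟩ : G ≤ H ∧ ∃ v w, H.Adj v w ∧ ¬ G.Adj v w := by
    simpa only [le_iff_adj, not_forall, exists_prop] using lt_iff_le_not_ge.mp hlt
  simp only [indPoly_eq_sum_indepSubsets_univ]
  refine sum_lt_sum_of_subset (i := {v, w}) (fun S hS ↦ ?_) ?_ ?_ (by positivity)
    fun _ _ _ ↦ by positivity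
  · rw [mem_indepSubsets] at hS ⊢
    exact ⟨hS.1, hS.2.mono' fun a b hab hGab ↦ hab (hle hGab)⟩
  · simp [mem_indepSubsets, Set.pairwise_insert, hG, G.adj_comm w v]
  · simp [mem_indepSubsets, Set.pairwise_insert, hH, hH.ne]

theorem indPoly_congr {G : SimpleGraph V} {H : SimpleGraph W} (e : G ≃g H) (x : ℝ) :
    indPoly G x = indPoly H x := by
  classical
  simp only [indPoly_eq_sum_indepSubsets_univ]
  refine sum_equiv e.toEquiv.finsetCongr (fun S ↦ ?_) fun S _ ↦ by simp
  simp [mem_indepSubsets, Set.Pairwise, e.map_adj_iff]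

theorem nonempty_iso_or_indPoly_lt_of_isContained {G : SimpleGraph V} {H : SimpleGraph W}
    (hx : 0 < x) (hcard : Fintype.card W = Fintype.card V) (hHG : H ⊑ G) :
    Nonempty (G ≃g H) ∨ indPoly G x < indPoly H x := by
  obtain ⟨f⟩ := hHG
  let e : W ≃ V := .ofBijective f ((Fintype.bijective_iff_injective_and_card f).mpr
    ⟨f.injective, hcard⟩)
  have hle : H ≤ G.comap e := fun _ _ h ↦ f.toHom.map_adj h
  have hiso : G.comap e ≃g G := Iso.comap e G
  rcases hle.eq_or_lt with heq | hlt
  · exact .inl ⟨heq ▸ hiso.symm⟩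
  · exact .inr (indPoly_congr hiso x ▸ indPoly_strictAnti hx hlt)

theorem isIndepSet_completeBipartiteGraph_iff {S : Finset (V ⊕ W)} :
    (completeBipartiteGraph V W).IsIndepSet (S : Set (V ⊕ W)) ↔
      S ⊆ univ.map .inl ∨ S ⊆ univ.map .inr := by
  constructor
  · intro hS
    by_contra! hcross
    obtain ⟨v, hv, hvr⟩ := not_subset.mp hcross.1
    obtain ⟨w, hw, hwl⟩ := not_subset.mp hcross.2
    have hadj : (completeBipartiteGraph V W).Adj v w := by
      cases v <;> cases w <;> simp_all
    exact hS hv hw hadj.ne hadj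
  · rintro (hS | hS) v hv w hw -
    all_goals
      obtain ⟨a, -, rfl⟩ := mem_map.mp (hS hv)
      obtain ⟨b, -, rfl⟩ := mem_map.mp (hS hw)
      simp

theorem indPoly_completeBipartiteGraph (x : ℝ) :
    indPoly (completeBipartiteGraph V W) x
      = (1 + x) ^ Fintype.card V + (1 + x) ^ Fintype.card W - 1 := by
  classical
  set left : Finset (V ⊕ W) := univ.map .inl
  set right : Finset (V ⊕ W) := univ.map .inr
  have hunion : indepSubsets (completeBipartiteGraph V W) univ
      = left.powerset ∪ right.powerset := by
    ext S
    rw [mem_indepSubsets, isIndepSet_completeBipartiteGraph_iff, mem_union, mem_powerset,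
      mem_powerset]
    exact and_iff_right (subset_univ S)
  have hinter : left.powerset ∩ right.powerset = {∅} := by
    ext S
    rw [mem_inter, mem_powerset, mem_powerset, ← subset_inter_iff,
      disjoint_iff_inter_eq_empty.mp (disjoint_map_inl_map_inr _ _), subset_empty, mem_singleton]
  have hsum := sum_union_inter (s₁ := left.powerset) (s₂ := right.powerset) (f := fun S ↦ x ^ #S)
  rw [← hunion, hinter, sum_singleton, card_empty, pow_zero, sum_powerset_pow_card,
    sum_powerset_pow_card, card_map, card_map, card_univ, card_univ] at hsum
  rw [indPoly_eq_sum_indepSubsets_univ, ← hsum, add_sub_cancel_right]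

theorem one_add_pow_lt_indPoly_completeBipartiteGraph [Nonempty V] (hx : 0 < x) :
    (1 + x) ^ Fintype.card W < indPoly (completeBipartiteGraph V W) x := by
  have : 1 < (1 + x) ^ Fintype.card V :=
    one_lt_pow₀ (by linarith) Fintype.card_ne_zero
  rw [indPoly_completeBipartiteGraph]
  linarith

end IndependencePolynomial

section MaximumIndependentSet

open Finset SimpleGraph

variable {V : Type*}

/-- The vertices of `I` without a neighbour in `S`: those by which an independent set with trace
`S` outside the independent set `I` may be extended inside `I`. -/
def nonNeighbors (G : SimpleGraph V) [DecidableRel G.Adj] (I S : Finset V) : Finset V :=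
  {w ∈ I | ∀ v ∈ S, ¬ G.Adj v w}

theorem nonNeighbors_subset (G : SimpleGraph V) [DecidableRel G.Adj] (I S : Finset V) :
    nonNeighbors G I S ⊆ I := filter_subset _ _

theorem mem_nonNeighbors {G : SimpleGraph V} [DecidableRel G.Adj] {I S : Finset V} {w : V} :
    w ∈ nonNeighbors G I S ↔ w ∈ I ∧ ∀ v ∈ S, ¬ G.Adj v w := by
  simp only [nonNeighbors, mem_filter]

theorem isIndepSet_union_iff [DecidableEq V] {G : SimpleGraph V} [DecidableRel G.Adj]
    {I S T : Finset V} (hI : G.IsIndepSet (I : Set V)) (hT : T ⊆ I) :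
    G.IsIndepSet ((S ∪ T : Finset V) : Set V) ↔
      G.IsIndepSet (S : Set V) ∧ T ⊆ nonNeighbors G I S := by
  simp only [← isIndepFinset_iff_isIndepSet]
  constructor
  · intro h
    refine ⟨fun v hv w hw ↦ h v (mem_union_left T hv) w (mem_union_left T hw), fun w hw ↦ ?_⟩
    exact mem_nonNeighbors.mpr
      ⟨hT hw, fun v hv ↦ h v (mem_union_left T hv) w (mem_union_right S hw)⟩
  · rintro ⟨hS, hTN⟩ v hv w hw
    rcases mem_union.mp hv with hvS | hvT <;> rcases mem_union.mp hw with hwS | hwT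
    · exact hS v hvS w hwS
    · exact (mem_nonNeighbors.mp (hTN hwT)).2 v hvS
    · exact fun hvw ↦ (mem_nonNeighbors.mp (hTN hvT)).2 w hwS hvw.symm
    · exact fun hvw ↦ hI (hT hvT) (hT hwT) hvw.ne hvw

variable {G : SimpleGraph V} [DecidableRel G.Adj] {I : Finset V}

theorem card_nonNeighbors_add_card_filter_adj_le {S : Finset V} {v : V} (hv : v ∈ S) :
    #(nonNeighbors G I S) + #{w ∈ I | G.Adj v w} ≤ #I := by
  classical
  rw [← card_union_of_disjoint]
  · exact card_le_card (union_subset (nonNeighbors_subset G I S) (filter_subset _ _))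
  · exact disjoint_left.mpr fun w hwS hw ↦
      (mem_nonNeighbors.mp hwS).2 v hv (mem_filter.mp hw).2

variable [Fintype V] [DecidableEq V] {x : ℝ}

theorem indPoly_eq_sum_indepSubsets_compl (hI : G.IsIndepSet (I : Set V)) (x : ℝ) :
    indPoly G x = ∑ S ∈ indepSubsets G Iᶜ, x ^ #S * (1 + x) ^ #(nonNeighbors G I S) := by
  simp_rw [← sum_powerset_pow_card, mul_sum, ← pow_add]
  rw [indPoly_eq_sum_indepSubsets_univ, sum_sigma']
  refine sum_nbij' (fun s ↦ ⟨s \ I, s ∩ I⟩) (fun p ↦ p.1 ∪ p.2) ?_ ?_ ?_ ?_ ?_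
  · intro s hs
    rw [mem_indepSubsets, ← sdiff_union_inter s I,
      isIndepSet_union_iff hI inter_subset_right] at hs
    rw [mem_sigma, mem_indepSubsets, mem_powerset]
    exact ⟨⟨subset_compl_iff_disjoint_right.mpr sdiff_disjoint, hs.2.1⟩, hs.2.2⟩
  · rintro ⟨S, T⟩ hST
    obtain ⟨⟨-, hS⟩, hT⟩ := by simpa only [mem_sigma, mem_indepSubsets, mem_powerset] using hST
    exact mem_indepSubsets.mpr ⟨subset_univ _,
      (isIndepSet_union_iff hI (hT.trans (nonNeighbors_subset G I S))).mpr ⟨hS, hT⟩⟩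
  · exact fun s _ ↦ sdiff_union_inter s I
  · rintro ⟨S, T⟩ hST
    obtain ⟨⟨hSI, -⟩, hT⟩ := by simpa only [mem_sigma, mem_indepSubsets, mem_powerset] using hST
    have hTI : T ⊆ I := hT.trans (nonNeighbors_subset G I S)
    have hdisj : Disjoint S I := disjoint_compl_left.mono_left hSI
    simp only [union_sdiff_distrib, union_inter_distrib_right, sdiff_eq_self_of_disjoint hdisj,
      sdiff_eq_empty_iff_subset.mpr hTI, disjoint_iff_inter_eq_empty.mp hdisj,
      inter_eq_left.mpr hTI, union_empty, empty_union]
  · intro s _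
    rw [card_sdiff_add_card_inter]

theorem card_nonNeighbors_add_card_le (hI : G.IsMaximumIndepSet I) {S : Finset V}
    (hS : S ∈ indepSubsets G Iᶜ) : #(nonNeighbors G I S) + #S ≤ #I := by
  obtain ⟨hSI, hS⟩ := mem_indepSubsets.mp hS
  have hN : nonNeighbors G I S ⊆ I := nonNeighbors_subset G I S
  rw [add_comm, ← card_union_of_disjoint]
  · exact hI.maximum _ ((isIndepSet_union_iff hI.isIndepSet hN).mpr ⟨hS, subset_rfl⟩)
  · exact disjoint_right.mpr fun v hv hvS ↦ mem_compl.mp (hSI hvS) (hN hv)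

theorem sum_indepSubsets_le (hI : G.IsMaximumIndepSet I) (hx : 0 ≤ x) {U : Finset V}
    (hU : U ⊆ Iᶜ) :
    ∑ S ∈ indepSubsets G U, x ^ #S * (1 + x) ^ #(nonNeighbors G I S)
      ≤ (1 + x) ^ #I * (1 + x / (1 + x)) ^ #U := by
  have hterm (S) (hS : S ∈ indepSubsets G U) :
      x ^ #S * (1 + x) ^ #(nonNeighbors G I S) ≤ (1 + x) ^ #I * (x / (1 + x)) ^ #S := by
    obtain ⟨hSU, hSG⟩ := mem_indepSubsets.mp hS
    have hle := card_nonNeighbors_add_card_le hI (mem_indepSubsets.mpr ⟨hSU.trans hU, hSG⟩)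
    rw [div_pow, mul_div_assoc', le_div_iff₀ (by positivity), mul_assoc, ← pow_add, mul_comm]
    gcongr
    linarith
  calc ∑ S ∈ indepSubsets G U, x ^ #S * (1 + x) ^ #(nonNeighbors G I S)
      ≤ ∑ S ∈ U.powerset, (1 + x) ^ #I * (x / (1 + x)) ^ #S :=
        (sum_le_sum hterm).trans <|
          sum_le_sum_of_subset_of_nonneg (indepSubsets_subset_powerset G U)
            fun _ _ _ ↦ by positivity
    _ = (1 + x) ^ #I * (1 + x / (1 + x)) ^ #U := by rw [← mul_sum, sum_powerset_pow_card]

theorem sum_indepSubsets_compl_not_disjoint_le (hx : 0 ≤ x) {H : Finset V} {c : ℝ} (hc : 0 ≤ c)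
    (hH : ∀ v ∈ H, 1 ≤ c * (1 + x) ^ #{w ∈ I | G.Adj v w}) :
    ∑ S ∈ indepSubsets G Iᶜ with ¬ Disjoint S H, x ^ #S * (1 + x) ^ #(nonNeighbors G I S)
      ≤ c * (1 + x) ^ Fintype.card V := by
  have hterm (S) (hS : S ∈ {S ∈ indepSubsets G Iᶜ | ¬ Disjoint S H}) :
      x ^ #S * (1 + x) ^ #(nonNeighbors G I S) ≤ x ^ #S * (c * (1 + x) ^ #I) := by
    obtain ⟨v, hvS, hvH⟩ := not_disjoint_iff.mp (mem_filter.mp hS).2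
    gcongr
    calc (1 + x) ^ #(nonNeighbors G I S)
        ≤ (1 + x) ^ #(nonNeighbors G I S) * (c * (1 + x) ^ #{w ∈ I | G.Adj v w}) :=
          le_mul_of_one_le_right (by positivity) (hH v hvH)
      _ = c * (1 + x) ^ (#(nonNeighbors G I S) + #{w ∈ I | G.Adj v w}) := by ring
      _ ≤ c * (1 + x) ^ #I := by
          gcongr
          · linarith
          · exact card_nonNeighbors_add_card_filter_adj_le hvS
  calc ∑ S ∈ indepSubsets G Iᶜ with ¬ Disjoint S H, x ^ #S * (1 + x) ^ #(nonNeighbors G I S)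
      ≤ ∑ S ∈ Iᶜ.powerset, x ^ #S * (c * (1 + x) ^ #I) :=
        (sum_le_sum hterm).trans <| sum_le_sum_of_subset_of_nonneg
          ((filter_subset _ _).trans (indepSubsets_subset_powerset G Iᶜ)) fun _ _ _ ↦ by positivity
    _ = c * (1 + x) ^ Fintype.card V := by
        rw [← sum_mul, sum_powerset_pow_card, mul_left_comm, ← pow_add, card_compl_add_card]

theorem indPoly_le_of_isMaximumIndepSet (hI : G.IsMaximumIndepSet I) (hx : 0 ≤ x) {H : Finset V}
    {c : ℝ} (hc : 0 ≤ c) (hH : ∀ v ∈ H, 1 ≤ c * (1 + x) ^ #{w ∈ I | G.Adj v w}) :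
    indPoly G x
      ≤ (1 + x) ^ #I * (1 + x / (1 + x)) ^ #(Iᶜ \ H) + c * (1 + x) ^ Fintype.card V := by
  have havoid : {S ∈ indepSubsets G Iᶜ | Disjoint S H} = indepSubsets G (Iᶜ \ H) := by
    ext S
    simp only [mem_filter, mem_indepSubsets, subset_sdiff]
    tauto
  rw [indPoly_eq_sum_indepSubsets_compl hI.isIndepSet,
    ← sum_filter_add_sum_filter_not _ (Disjoint · H), havoid]
  exact add_le_add (sum_indepSubsets_le hI hx sdiff_subset)
    (sum_indepSubsets_compl_not_disjoint_le hx hc hH)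

theorem card_filter_compl_adj_eq_degree (hI : G.IsIndepSet (I : Set V)) {v : V} (hv : v ∈ I) :
    #{w ∈ Iᶜ | G.Adj v w} = G.degree v := by
  rw [← card_neighborFinset_eq_degree]
  congr 1
  ext w
  simp only [mem_filter, mem_compl, mem_neighborFinset, and_iff_right_iff_imp]
  exact fun hvw hw ↦ hI hv hw hvw.ne hvw

theorem le_card_compl_of_forall_le_degree [Nonempty V] (hI : G.IsMaximumIndepSet I) {δ : ℕ}
    (hdeg : ∀ v, δ ≤ G.degree v) : δ ≤ #Iᶜ := by
  obtain ⟨u⟩ := ‹Nonempty V›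
  obtain ⟨v, hv⟩ : I.Nonempty := card_pos.mp (hI.maximum {u} (by simp))
  calc δ ≤ #{w ∈ Iᶜ | G.Adj v w} := card_filter_compl_adj_eq_degree hI.isIndepSet hv ▸ hdeg v
    _ ≤ #Iᶜ := card_filter_le _ _

theorem isCompleteBetween_compl_of_card_compl_le_degree (hI : G.IsIndepSet (I : Set V))
    (hdeg : ∀ v, #Iᶜ ≤ G.degree v) : G.IsCompleteBetween (Iᶜ : Finset V) (I : Set V) := by
  intro w hw v hv
  have hfull : {w ∈ Iᶜ | G.Adj v w} = Iᶜ := eq_of_subset_of_card_le (filter_subset _ _)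
    (card_filter_compl_adj_eq_degree hI hv ▸ hdeg v)
  exact (filter_eq_self.mp hfull w hw).symm

end MaximumIndependentSet

section Threshold

open Real

/-- The constant `C_x`: a complement of a maximum independent set with at least `C_x * δ` vertices
is large enough for the exchange bound alone to suffice. -/
noncomputable def thresholdC (x : ℝ) : ℝ := log (1 + x) / (log (1 + x) - x / (1 + x))

/-- The constant `D_x`, the exponent for which `(1 + x) ^ D_x = (x / (1 + x)) ^ 2`. -/
noncomputable def thresholdD (x : ℝ) : ℝ := 2 * log (x / (1 + x)) / log (1 + x)

variable {x : ℝ}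

theorem div_one_add_lt_log_one_add (hx : 0 < x) : x / (1 + x) < log (1 + x) :=
  calc x / (1 + x) < 2 * x / (x + 2) := by
        rw [div_lt_div_iff₀ (by positivity) (by positivity)]
        nlinarith
    _ < log (1 + x) := lt_log_one_add_of_pos hx

theorem one_lt_thresholdC (hx : 0 < x) : 1 < thresholdC x := by
  have := div_one_add_lt_log_one_add hx
  rw [thresholdC, one_lt_div (by linarith)]
  linarith [show 0 < x / (1 + x) by positivity]

theorem thresholdD_neg (hx : 0 < x) : thresholdD x < 0 := by
  have hlog : log (x / (1 + x)) < 0 :=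
    log_neg (by positivity) ((div_lt_one (by positivity)).mpr (by linarith))
  exact div_neg_of_neg_of_pos (by linarith) (log_pos (by linarith))

theorem one_add_div_pow_le_of_thresholdC_mul_le (hx : 0 < x) {k δ : ℕ}
    (h : thresholdC x * δ ≤ k + δ) : (1 + x / (1 + x)) ^ (k + δ) ≤ (1 + x) ^ k := by
  have hpos := sub_pos.mpr (div_one_add_lt_log_one_add hx)
  have hexp : (k + δ) * (x / (1 + x)) ≤ k * log (1 + x) := by
    rw [thresholdC, div_mul_eq_mul_div, div_le_iff₀ hpos] at h
    linarith
  calc (1 + x / (1 + x)) ^ (k + δ) ≤ exp (x / (1 + x)) ^ (k + δ) := by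
        gcongr
        linarith [add_one_le_exp (x / (1 + x))]
    _ = exp ((k + δ) * (x / (1 + x))) := by rw [← exp_nat_mul, Nat.cast_add]
    _ ≤ exp (k * log (1 + x)) := exp_le_exp.mpr hexp
    _ = (1 + x) ^ k := by rw [exp_nat_mul, exp_log (by positivity)]

theorem one_add_pow_le_of_sub_thresholdD_le (hx : 0 < x) {δ d : ℕ} (h : δ - thresholdD x ≤ d) :
    (1 + x) ^ δ ≤ (x / (1 + x)) ^ 2 * (1 + x) ^ d := by
  have hlog : 0 < log (1 + x) := log_pos (by linarith)
  rw [← log_le_log_iff (by positivity) (by positivity), log_mul (by positivity) (by positivity),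
    log_pow, log_pow, log_pow, Nat.cast_two]
  rw [thresholdD, sub_le_iff_le_add, ← sub_le_iff_le_add', le_div_iff₀ hlog] at h
  linarith

theorem one_add_div_pow_le (hx : 0 ≤ x) {k : ℕ} (hk : k ≠ 0) :
    (1 + x / (1 + x)) ^ k ≤ (1 + x) ^ k * (1 - (x / (1 + x)) ^ 2) := by
  have hq : (x / (1 + x)) ^ 2 ≤ 1 :=
    pow_le_one₀ (by positivity) ((div_le_one (by positivity)).mpr (by linarith))
  have hfactor : 1 + x / (1 + x) = (1 + x) * (1 - (x / (1 + x)) ^ 2) := by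
    field_simp
    ring
  rw [hfactor, mul_pow]
  gcongr
  exact pow_le_of_le_one (by linarith) (by linarith [sq_nonneg (x / (1 + x))]) hk

theorem succ_mul_sub_add_le {C D δ k n : ℝ} (hk : k ≤ (C - 1) * δ) (hD : 0 ≤ δ - D + 1)
    (hn : (C - 1) * δ ^ 2 + ((1 - D) * C + 1 + D) * δ - D ≤ n) :
    (k + 1) * (δ - D) + k + δ ≤ n := by
  linarith [mul_le_mul_of_nonneg_right hk hD]

theorem two_mul_sub_thresholdD_le (hx : 0 < x) {δ n : ℝ} (hδ : 0 ≤ δ)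
    (hn : (thresholdC x - 1) * δ ^ 2
      + ((1 - thresholdD x) * thresholdC x + 1 + thresholdD x) * δ - thresholdD x ≤ n) :
    2 * δ - thresholdD x ≤ n := by
  have hC : 0 ≤ (thresholdC x - 1) * δ :=
    mul_nonneg (sub_nonneg.mpr (one_lt_thresholdC hx).le) hδ
  linarith [succ_mul_sub_add_le hC (by linarith [thresholdD_neg hx]) hn]

end Threshold

section Bounds

open Finset SimpleGraph

variable {V : Type*} [Fintype V] [DecidableEq V] {G : SimpleGraph V} {I : Finset V} {x : ℝ}
  {k δ : ℕ}

theorem indPoly_le_of_thresholdC_mul_le (hI : G.IsMaximumIndepSet I) (hx : 0 < x)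
    (hk : #Iᶜ = k + δ) (hC : thresholdC x * δ ≤ k + δ) : indPoly G x ≤ (1 + x) ^ (#I + k) := by
  classical
  calc indPoly G x ≤ (1 + x) ^ #I * (1 + x / (1 + x)) ^ (k + δ) := by
        simpa [hk] using indPoly_le_of_isMaximumIndepSet hI hx.le (H := ∅) le_rfl (by simp)
    _ ≤ (1 + x) ^ #I * (1 + x) ^ k := by
        gcongr
        exact one_add_div_pow_le_of_thresholdC_mul_le hx hC
    _ = (1 + x) ^ (#I + k) := (pow_add _ _ _).symm

variable [DecidableRel G.Adj]

theorem indPoly_le_of_sub_thresholdD_le (hI : G.IsMaximumIndepSet I) (hx : 0 < x) {H : Finset V}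
    (hHI : H ⊆ Iᶜ) (hk : #Iᶜ = k + #H) (hk0 : k ≠ 0)
    (hH : ∀ v ∈ H, #H - thresholdD x ≤ #{w ∈ I | G.Adj v w}) :
    indPoly G x ≤ (1 + x) ^ (#I + k) := by
  set q := x / (1 + x)
  have hheavy (v) (hv : v ∈ H) : 1 ≤ q ^ 2 / (1 + x) ^ #H * (1 + x) ^ #{w ∈ I | G.Adj v w} := by
    rw [div_mul_eq_mul_div, one_le_div (by positivity)]
    exact one_add_pow_le_of_sub_thresholdD_le hx (hH v hv)
  have hsdiff : #(Iᶜ \ H) = k := by rw [card_sdiff_of_subset hHI]; omega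
  have hcard : Fintype.card V = #I + k + #H := by rw [← card_add_card_compl I, hk, add_assoc]
  calc indPoly G x
      ≤ (1 + x) ^ #I * (1 + q) ^ k + q ^ 2 / (1 + x) ^ #H * (1 + x) ^ (#I + k + #H) := by
        rw [← hcard, ← hsdiff]
        exact indPoly_le_of_isMaximumIndepSet hI hx.le (by positivity) hheavy
    _ ≤ (1 + x) ^ #I * ((1 + x) ^ k * (1 - q ^ 2)) + q ^ 2 * (1 + x) ^ (#I + k) := by
        refine add_le_add (mul_le_mul_of_nonneg_left (one_add_div_pow_le hx.le hk0)
          (by positivity)) (le_of_eq ?_)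
        rw [pow_add _ _ #H]
        field_simp
    _ = (1 + x) ^ (#I + k) := by ring

theorem indPoly_le_of_forall_le_degree (hI : G.IsMaximumIndepSet I) (hx : 0 < x)
    (hk : #Iᶜ = k + δ) (hk0 : k ≠ 0) (hdeg : ∀ v, δ ≤ G.degree v)
    (hn : (thresholdC x - 1) * (δ : ℝ) ^ 2
      + ((1 - thresholdD x) * thresholdC x + 1 + thresholdD x) * δ - thresholdD x
        ≤ Fintype.card V) :
    indPoly G x ≤ (1 + x) ^ (#I + k) := by
  rcases le_total (thresholdC x * δ) (k + δ) with hC | hC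
  · exact indPoly_le_of_thresholdC_mul_le hI hx hk hC
  have hδ : (0 : ℝ) ≤ δ := δ.cast_nonneg
  have hcard : (Fintype.card V : ℝ) = #I + (k + δ) := by
    rw [← card_add_card_compl I, hk]
    push_cast
    rfl
  have hcount : (k + 1) * (δ - thresholdD x) ≤ #I := by
    linarith [succ_mul_sub_add_le (by linarith : (k : ℝ) ≤ (thresholdC x - 1) * δ)
      (by linarith [thresholdD_neg hx]) hn]
  obtain ⟨H, hHsub, rfl⟩ := exists_subset_card_eq
    (le_card_filter_card_le_succ_mul_card_bipartiteBelow G.Adj hk fun v hv ↦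
      (card_filter_compl_adj_eq_degree hI.isIndepSet hv).symm ▸ hdeg v)
  refine indPoly_le_of_sub_thresholdD_le hI hx (hHsub.trans (filter_subset _ _)) hk hk0
    fun v hv ↦ ?_
  have hv : (#I : ℝ) ≤ (k + 1) * #{w ∈ I | G.Adj v w} := by
    simp_rw [G.adj_comm v]
    exact_mod_cast (mem_filter.mp (hHsub hv)).2
  exact le_of_mul_le_mul_left (hcount.trans hv) (by positivity)

end Bounds

theorem main_weighted_bound {V : Type*} [Fintype V] (G : SimpleGraph V) [DecidableRel G.Adj]
    (n δ : ℕ) (x Cx Dx : ℝ) (hx : 0 < x) (hδ : 1 ≤ δ)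
    (hCx : Cx = Real.log (1 + x) / (Real.log (1 + x) - x / (1 + x)))
    (hDx : Dx = 2 * Real.log (x / (1 + x)) / Real.log (1 + x))
    (hcard : Fintype.card V = n)
    (hn : (Cx - 1) * (δ : ℝ) ^ 2 + ((1 - Dx) * Cx + 1 + Dx) * δ - Dx ≤ (n : ℝ))
    (hdeg : ∀ v : V, δ ≤ G.degree v) :
    Nonempty (G ≃g completeBipartiteGraph (Fin δ) (Fin (n - δ))) ∨
      indPoly G x < indPoly (completeBipartiteGraph (Fin δ) (Fin (n - δ))) x := by
  classical
  obtain rfl : Cx = thresholdC x := hCx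
  obtain rfl : Dx = thresholdD x := hDx
  have hn0 : (0 : ℝ) < n := by
    linarith [two_mul_sub_thresholdD_le hx δ.cast_nonneg hn, thresholdD_neg hx,
      δ.cast_nonneg (α := ℝ)]
  have : Nonempty V := Fintype.card_pos_iff.mp (hcard ▸ Nat.cast_pos.mp hn0)
  obtain ⟨I, hI⟩ := G.maximumIndepSet_exists
  obtain ⟨k, hk⟩ := Nat.exists_eq_add_of_le' (le_card_compl_of_forall_le_degree hI hdeg)
  have hnI : n - δ = I.card + k := by have := I.card_add_card_compl; omega
  rcases eq_or_ne k 0 with rfl | hk0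
  · refine nonempty_iso_or_indPoly_lt_of_isContained hx ?_
      (SimpleGraph.completeBipartiteGraph_isContained_iff.mpr ⟨Iᶜ, I, ?_, ?_,
        isCompleteBetween_compl_of_card_compl_le_degree hI.isIndepSet ?_⟩)
    all_goals simp [hk, hdeg, hnI, ← I.card_compl_add_card]
  · right
    have : Nonempty (Fin δ) := ⟨⟨0, hδ⟩⟩
    calc indPoly G x ≤ (1 + x) ^ Fintype.card (Fin (n - δ)) := by
          rw [Fintype.card_fin, hnI]
          exact indPoly_le_of_forall_le_degree hI hx hk hk0 hdeg (hcard ▸ hn)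
      _ < indPoly (completeBipartiteGraph (Fin δ) (Fin (n - δ))) x :=
          one_add_pow_lt_indPoly_completeBipartiteGraph hx
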